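/- arXiv:1508.06593 — 2 statements merged into one kernel-verified Lean document; each statement's English description precedes it below -/
import Mathlib

section
/- Let a be a semi-integer (2a ∈ ℤ, a ≠ 0), let x be an (n−2)-dimensional central configuration for U_a with positive masses m_1, …, m_n normalized so that λ/M = 1, with mutual distances r = (r_{ij}), and let z_1, …, z_n be associated numbers (all real or all purely imaginary, at least two nonzero) satisfying r_{ij}^{2a} − 1 − z_i z_j = 0 for all i < j, ∑_j m_j z_j = 0 and Δ_0 + ∑_j m_j z_j r_{jl}² = 0 for all l. Then there exists an index i ∈ {1, …, n} such that ∑_{j≠i} r_{ij}^{−2a+1} (∂F/∂R_{ij})(r) z_j ≠ 0; that is, the quantities Ψ_i^a evaluated at the point associated to x do not all vanish simultaneously. -/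
/-- The dimension of a configuration: the dimension of the smallest affine
subspace containing the points. -/
noncomputable def confDim {d n : ℕ} (x : Fin n → EuclideanSpace ℝ (Fin d)) : ℕ :=
  Module.finrank ℝ (affineSpan ℝ (Set.range x)).direction

/-- `x` is a central configuration for the potential `U_a` (with `c2 = 2a ∈ ℤ`),
masses `m`, and multiplier `lam`. -/
def IsCentralConfig {d n : ℕ} (c2 : ℤ) (m : Fin n → ℝ) (lam : ℝ)
    (x : Fin n → EuclideanSpace ℝ (Fin d)) : Prop :=
  ∀ j : Fin n,
    (∑ i ∈ Finset.univ \ {j}, (m i * dist (x i) (x j) ^ c2) • (x i - x j))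
      + lam • (x j - (∑ i, m i)⁻¹ • ∑ i, m i • x i) = 0

/-- Index type for the mutual-distance variables `R_{ij}`, `1 ≤ i < j ≤ n`. -/
abbrev PairIdx (n : ℕ) := {p : Fin n × Fin n // p.1 < p.2}

/-- The polynomial `R_{ij}` (for an unordered pair `{i,j}`; junk value `0` if `i = j`). -/
noncomputable def Rvar {n : ℕ} (i j : Fin n) : MvPolynomial (PairIdx n) ℂ :=
  if h : i < j then MvPolynomial.X ⟨(i, j), h⟩
  else if h' : j < i then MvPolynomial.X ⟨(j, i), h'⟩ else 0

/-- The polynomial Cayley–Menger matrix `A(R)` over `ℂ[R_{12}, …, R_{(n−1)n}]`. -/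
noncomputable def cmPolyMatrix (n : ℕ) :
    Matrix (Fin (n + 1)) (Fin (n + 1)) (MvPolynomial (PairIdx n) ℂ) :=
  Matrix.of fun i j =>
    Fin.cases (Fin.cases 0 (fun _ => 1) j)
      (fun i' => Fin.cases 1 (fun j' => Rvar i' j' ^ 2) j) i

/-- The Cayley–Menger determinant polynomial `F = det A(R)`. -/
noncomputable def Fpoly (n : ℕ) : MvPolynomial (PairIdx n) ℂ := (cmPolyMatrix n).det

/-- `∂F/∂R_{ij}` for an unordered pair `{i,j}` (junk value `0` if `i = j`). -/
noncomputable def dF {n : ℕ} (i j : Fin n) : MvPolynomial (PairIdx n) ℂ :=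
  if h : i < j then MvPolynomial.pderiv (⟨(i, j), h⟩ : PairIdx n) (Fpoly n)
  else if h' : j < i then MvPolynomial.pderiv (⟨(j, i), h'⟩ : PairIdx n) (Fpoly n) else 0

open Matrix in
theorem derivation_prod_aux {R A ι : Type*} [CommRing R] [CommRing A] [Algebra R A]
    [DecidableEq ι] (D : Derivation R A A) (f : ι → A) (s : Finset ι) :
    D (∏ i ∈ s, f i) = ∑ a ∈ s, ∏ i ∈ s, (if i = a then D (f i) else f i) := by
  induction s using Finset.induction_on with
  | empty => simp
  | insert a s ha ih =>
    rw [Finset.prod_insert ha, D.leibniz, ih, Finset.sum_insert ha, Finset.prod_insert ha]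
    simp only [if_true, smul_eq_mul]
    rw [add_comm]
    congr 1
    · rw [mul_comm]
      congr 1
      apply Finset.prod_congr rfl
      intro i hi
      rw [if_neg]
      rintro rfl
      exact ha hi
    · rw [Finset.mul_sum]
      apply Finset.sum_congr rfl
      intro b hb
      rw [Finset.prod_insert ha, if_neg]
      rintro rfl
      exact ha hb

theorem derivation_det_aux {R A ι : Type*} [CommRing R] [CommRing A] [Algebra R A]
    [DecidableEq ι] [Fintype ι] (D : Derivation R A A) (M : Matrix ι ι A) :
    D M.det = ∑ a, ∑ b, M.adjugate b a * D (M a b) := by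
  have h1 : ∀ a, ∑ b, M.adjugate b a * D (M a b)
      = (M.updateRow a (fun b => D (M a b))).det := by
    intro a
    rw [← Matrix.cramer_transpose_apply, Matrix.cramer_eq_adjugate_mulVec,
      ← Matrix.adjugate_transpose]
    simp [Matrix.mulVec, dotProduct]
  simp only [h1]
  simp only [← Matrix.det_transpose M, ← fun a v => Matrix.det_transpose (M.updateRow a v)]
  simp only [Matrix.det_apply', map_sum]
  rw [Finset.sum_comm]
  apply Finset.sum_congr rfl
  intro σ _
  rw [D.leibniz, D.map_intCast, smul_zero, add_zero, derivation_prod_aux, smul_eq_mul,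
    Finset.mul_sum]
  apply Finset.sum_congr rfl
  intro a _
  congr 1
  apply Finset.prod_congr rfl
  intro i _
  simp only [Matrix.transpose_apply, Matrix.updateRow_apply]
  split_ifs with h
  · subst h; rfl
  · rfl

theorem Rvar_comm {n : ℕ} (i j : Fin n) : Rvar i j = Rvar j i := by
  unfold Rvar
  rcases lt_trichotomy i j with h | h | h
  · simp [h, h.not_gt]
  · simp [h]
  · simp [h, h.not_gt]

theorem cm_symm (n : ℕ) : (cmPolyMatrix n).IsSymm := by
  ext i j
  refine Fin.cases ?_ (fun i => ?_) i <;> refine Fin.cases ?_ (fun j => ?_) j <;>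
    simp [cmPolyMatrix, Matrix.transpose_apply, Rvar_comm]

theorem pderiv_Rvar {n : ℕ} (i j : Fin n) (h : i < j) (k l : Fin n) :
    MvPolynomial.pderiv (⟨(i, j), h⟩ : PairIdx n) (Rvar k l)
      = (if k = i ∧ l = j then 1 else 0) + (if k = j ∧ l = i then 1 else 0) := by
  unfold Rvar
  split_ifs with h1 h2 h3 h4 h5 h6 h7 h8 <;>
    simp [MvPolynomial.pderiv_X, Pi.single_apply, Prod.ext_iff] <;> grind

theorem pderiv_F {n : ℕ} (i j : Fin n) (h : i < j) :
    MvPolynomial.pderiv (⟨(i, j), h⟩ : PairIdx n) (Fpoly n)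
      = 4 * Rvar i j * (cmPolyMatrix n).adjugate j.succ i.succ := by
  have hs := (cm_symm n).adjugate
  have e : (cmPolyMatrix n).adjugate i.succ j.succ = (cmPolyMatrix n).adjugate j.succ i.succ :=
    hs.apply _ _
  unfold Fpoly
  rw [derivation_det_aux]
  simp only [Fin.sum_univ_succ (n := n)]
  have hx : ∀ k l : Fin n, MvPolynomial.pderiv (⟨(i, j), h⟩ : PairIdx n) (cmPolyMatrix n k.succ l.succ)
      = (if k = i then (if l = j then 2 * Rvar i j else 0) else 0) + (if k = j then (if l = i then 2 * Rvar i j else 0) else 0) := by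
    intro k l
    have : cmPolyMatrix n k.succ l.succ = Rvar k l ^ 2 := by simp [cmPolyMatrix]
    rw [this, Derivation.leibniz_pow, pderiv_Rvar]
    by_cases h1 : k = i ∧ l = j
    · obtain ⟨rfl, rfl⟩ := h1
      simp [h.ne]
    · by_cases h2 : k = j ∧ l = i
      · obtain ⟨rfl, rfl⟩ := h2
        simp [h.ne', Rvar_comm k l]
      · rw [if_neg h1, if_neg h2, ← ite_and, ← ite_and, if_neg h1, if_neg h2]
        simp
  have h0 : cmPolyMatrix n 0 0 = 0 := by simp [cmPolyMatrix]
  have h1 : ∀ k : Fin n, cmPolyMatrix n 0 k.succ = 1 := by simp [cmPolyMatrix]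
  have h2 : ∀ k : Fin n, cmPolyMatrix n k.succ 0 = 1 := by simp [cmPolyMatrix]
  simp only [h0, h1, h2, hx, mul_add, Finset.sum_add_distrib]
  simp [e]
  ring

theorem dF_eq {n : ℕ} (i j : Fin n) (h : i ≠ j) :
    dF i j = 4 * Rvar i j * (cmPolyMatrix n).adjugate j.succ i.succ := by
  unfold dF
  rcases lt_or_gt_of_ne h with h | h
  · rw [dif_pos h, pderiv_F]
  · rw [dif_neg h.not_gt, dif_pos h, pderiv_F, Rvar_comm, (cm_symm n).adjugate.apply]

/-- The affine dependencies of a configuration of maximal rank form a line. -/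
theorem dep_line {n : ℕ} (hn : 3 ≤ n) (x : Fin n → EuclideanSpace ℝ (Fin (n - 2)))
    (hdim : confDim x = n - 2) :
    (vectorSpan ℝ (Set.range x) = ⊤) ∧
    ∀ y : Fin n → ℝ, y ≠ 0 → ∑ j, y j = 0 → ∑ j, y j • x j = 0 →
    ∀ w : Fin n → ℝ, ∑ j, w j = 0 → ∑ j, w j • x j = 0 → ∃ c : ℝ, c • y = w := by
  have htop : vectorSpan ℝ (Set.range x) = ⊤ := by
    apply Submodule.eq_top_of_finrank_eq
    rw [← direction_affineSpan]
    unfold confDim at hdim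
    rw [hdim]; simp
  refine ⟨htop, ?_⟩
  intro y hy0 hy1 hy2 w hw1 hw2
  let L : (Fin n → ℝ) →ₗ[ℝ] ℝ × EuclideanSpace ℝ (Fin (n - 2)) :=
    Fintype.linearCombination ℝ (fun j => ((1 : ℝ), x j))
  have hL : ∀ u, L u = (∑ j, u j, ∑ j, u j • x j) := by
    intro u
    simp [L, Fintype.linearCombination_apply, Prod.ext_iff, Prod.fst_sum, Prod.snd_sum]
  have hmem : ∀ j, ((1 : ℝ), x j) ∈ LinearMap.range L := by
    intro j
    refine ⟨Pi.single j 1, ?_⟩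
    simp [L]
  have h0 : vectorSpan ℝ (Set.range x) ≤ (LinearMap.range L).comap (LinearMap.inr ℝ ℝ _) := by
    rw [vectorSpan_def, Submodule.span_le]
    rintro _ ⟨_, ⟨a, rfl⟩, _, ⟨b, rfl⟩, rfl⟩
    have := (LinearMap.range L).sub_mem (hmem a) (hmem b)
    simpa using this
  have hsurj : LinearMap.range L = ⊤ := by
    rw [eq_top_iff]
    rintro ⟨s, e⟩ _
    let j0 : Fin n := ⟨0, by omega⟩
    have h1 := (LinearMap.range L).smul_mem s (hmem j0)
    have h2 : ((0 : ℝ), e - s • x j0) ∈ LinearMap.range L := by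
      apply h0
      rw [htop]; trivial
    simpa using (LinearMap.range L).add_mem h1 h2
  have hr := LinearMap.finrank_range_add_finrank_ker L
  rw [hsurj, finrank_top] at hr
  simp only [Module.finrank_prod, Module.finrank_self, finrank_euclideanSpace, Fintype.card_fin,
    Module.finrank_fin_fun] at hr
  have hk : Module.finrank ℝ (LinearMap.ker L) = 1 := by omega
  have hyk : y ∈ LinearMap.ker L := by rw [LinearMap.mem_ker, hL, hy1, hy2]; rfl
  have hwk : w ∈ LinearMap.ker L := by rw [LinearMap.mem_ker, hL, hw1, hw2]; rfl
  obtain ⟨c, hc⟩ := (finrank_eq_one_iff_of_nonzero' (⟨y, hyk⟩ : LinearMap.ker L)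
    (by simpa using hy0)).mp hk ⟨w, hwk⟩
  exact ⟨c, congrArg Subtype.val hc⟩

/-- Real Cayley–Menger kernel vectors give affine dependencies. -/
theorem real_ker {n : ℕ} (x : Fin n → EuclideanSpace ℝ (Fin (n - 2)))
    (htop : vectorSpan ℝ (Set.range x) = ⊤) (w0 : ℝ) (w : Fin n → ℝ)
    (h1 : ∑ j, w j = 0) (h2 : ∀ l, w0 + ∑ j, w j * dist (x j) (x l) ^ 2 = 0) :
    ∑ j, w j • x j = 0 := by
  set p := ∑ j, w j • x j with hp
  have h3 : ∀ l, ∑ j, w j * dist (x j) (x l) ^ 2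
      = ∑ j, w j * ‖x j‖ ^ 2 - 2 * inner ℝ p (x l) := by
    intro l
    have : ∀ j, w j * dist (x j) (x l) ^ 2
        = w j * ‖x j‖ ^ 2 - 2 * (w j * inner ℝ (x j) (x l)) + w j * ‖x l‖ ^ 2 := by
      intro j
      rw [dist_eq_norm, norm_sub_sq_real]; ring
    simp only [this, Finset.sum_add_distrib, Finset.sum_sub_distrib, ← Finset.mul_sum,
      ← Finset.sum_mul, h1, hp, sum_inner, inner_smul_left]
    simp
  have h4 : vectorSpan ℝ (Set.range x) ≤ LinearMap.ker (innerₛₗ ℝ p) := by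
    rw [vectorSpan_def, Submodule.span_le]
    rintro _ ⟨_, ⟨a, rfl⟩, _, ⟨b, rfl⟩, rfl⟩
    have ha := h2 a
    have hb := h2 b
    rw [h3] at ha hb
    simp only [SetLike.mem_coe, LinearMap.mem_ker, innerₛₗ_apply_apply, vsub_eq_sub, inner_sub_right]
    linarith
  have h5 : p ∈ LinearMap.ker (innerₛₗ ℝ p) := by
    apply h4; rw [htop]; trivial
  simpa using h5

theorem complex_ker {n : ℕ} (x : Fin n → EuclideanSpace ℝ (Fin (n - 2)))
    (htop : vectorSpan ℝ (Set.range x) = ⊤) (w0 : ℂ) (w : Fin n → ℂ)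
    (h1 : ∑ j, w j = 0) (h2 : ∀ l, w0 + ∑ j, w j * (dist (x j) (x l) : ℂ) ^ 2 = 0) :
    (∑ j, (w j).re = 0 ∧ ∑ j, (w j).re • x j = 0) ∧
    (∑ j, (w j).im = 0 ∧ ∑ j, (w j).im • x j = 0) := by
  have hr : ∑ j, (w j).re = 0 := by simpa using congrArg Complex.re h1
  have hi : ∑ j, (w j).im = 0 := by simpa using congrArg Complex.im h1
  refine ⟨⟨hr, real_ker x htop w0.re _ hr fun l => ?_⟩, ⟨hi, real_ker x htop w0.im _ hi fun l => ?_⟩⟩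
  · have := congrArg Complex.re (h2 l)
    simpa [← Complex.ofReal_pow] using this
  · have := congrArg Complex.im (h2 l)
    simpa [← Complex.ofReal_pow] using this

theorem complex_line {n : ℕ} (hn : 3 ≤ n) (x : Fin n → EuclideanSpace ℝ (Fin (n - 2)))
    (hdim : confDim x = n - 2) (v0 : ℂ) (v : Fin n → ℂ) (hv : v ≠ 0)
    (hv1 : ∑ j, v j = 0) (hv2 : ∀ l, v0 + ∑ j, v j * (dist (x j) (x l) : ℂ) ^ 2 = 0)
    (w0 : ℂ) (w : Fin n → ℂ)
    (h1 : ∑ j, w j = 0) (h2 : ∀ l, w0 + ∑ j, w j * (dist (x j) (x l) : ℂ) ^ 2 = 0) :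
    ∃ c : ℂ, ∀ j, w j = c * v j := by
  obtain ⟨htop, hline⟩ := dep_line hn x hdim
  obtain ⟨⟨a1, a2⟩, ⟨a3, a4⟩⟩ := complex_ker x htop v0 v hv1 hv2
  obtain ⟨⟨b1, b2⟩, ⟨b3, b4⟩⟩ := complex_ker x htop w0 w h1 h2
  have : ∃ y : Fin n → ℝ, y ≠ 0 ∧ ∑ j, y j = 0 ∧ ∑ j, y j • x j = 0 := by
    by_cases h : (fun j => (v j).re) = 0
    · refine ⟨fun j => (v j).im, ?_, a3, a4⟩
      intro h'
      apply hv
      funext j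
      exact Complex.ext (congrFun h j) (congrFun h' j)
    · exact ⟨_, h, a1, a2⟩
  obtain ⟨y, y0, y1, y2⟩ := this
  obtain ⟨p, hp⟩ := hline y y0 y1 y2 _ a1 a2
  obtain ⟨q, hq⟩ := hline y y0 y1 y2 _ a3 a4
  obtain ⟨s, hs⟩ := hline y y0 y1 y2 _ b1 b2
  obtain ⟨t, ht⟩ := hline y y0 y1 y2 _ b3 b4
  have hvy : ∀ j, v j = ((p : ℂ) + q * Complex.I) * y j := by
    intro j
    have e1 := congrFun hp j
    have e2 := congrFun hq j
    simp only [Pi.smul_apply, smul_eq_mul] at e1 e2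
    apply Complex.ext <;> simp [← e1, ← e2]
  have hwy : ∀ j, w j = ((s : ℂ) + t * Complex.I) * y j := by
    intro j
    have e1 := congrFun hs j
    have e2 := congrFun ht j
    simp only [Pi.smul_apply, smul_eq_mul] at e1 e2
    apply Complex.ext <;> simp [← e1, ← e2]
  have hne : ((p : ℂ) + q * Complex.I) ≠ 0 := by
    intro h
    apply hv
    funext j
    rw [hvy, h]; simp
  refine ⟨((s : ℂ) + t * Complex.I) / ((p : ℂ) + q * Complex.I), fun j => ?_⟩
  rw [hwy, hvy, ← mul_assoc, div_mul_cancel₀ _ hne]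

/-- In the setting of the correspondence (positive masses, `λ = M`,
`z`'s all real or all purely imaginary with at least two nonzero, satisfying the
defining equations), there exists an index `i` such that
`∑_{j≠i} r_{ij}^{−2a+1} (∂F/∂R_{ij})(r) z_j ≠ 0`. -/
theorem statement10 {n : ℕ} (hn : 3 ≤ n) (c2 : ℤ) (hc2 : c2 ≠ 0)
    (x : Fin n → EuclideanSpace ℝ (Fin (n - 2))) (hinj : Function.Injective x)
    (m : Fin n → ℝ) (hm : ∀ i, 0 < m i)
    (hcc : IsCentralConfig c2 m (∑ i, m i) x) (hdim : confDim x = n - 2)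
    (z : Fin n → ℂ) (Δ0 : ℂ)
    (hzri : ((∀ i, (z i).im = 0) ∧ Δ0.im = 0) ∨ ((∀ i, (z i).re = 0) ∧ Δ0.re = 0))
    (hz2 : ∃ i j : Fin n, i ≠ j ∧ z i ≠ 0 ∧ z j ≠ 0)
    (hz : ∀ i j : Fin n, i < j → (dist (x i) (x j) : ℂ) ^ c2 - 1 - z i * z j = 0)
    (hker0 : ∑ j, (m j : ℂ) * z j = 0)
    (hkerl : ∀ l : Fin n, Δ0 + ∑ j, (m j : ℂ) * z j * (dist (x j) (x l) : ℂ) ^ 2 = 0) :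
    ∃ i : Fin n,
      ∑ j ∈ Finset.univ \ {i},
          (dist (x i) (x j) : ℂ) ^ (1 - c2) *
            MvPolynomial.eval (fun p : PairIdx n => ((dist (x p.1.1) (x p.1.2) : ℝ) : ℂ))
              (dF i j) * z j ≠ 0 := by
  obtain ⟨i, k, hik, hzi, hzk⟩ := hz2
  refine ⟨i, ?_⟩
  set r : PairIdx n → ℂ := fun p => ((dist (x p.1.1) (x p.1.2) : ℝ) : ℂ) with hr
  have hR : ∀ a b, MvPolynomial.eval r (Rvar a b) = (dist (x a) (x b) : ℂ) := by
    intro a b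
    unfold Rvar
    rcases lt_trichotomy a b with h | h | h
    · simp [h, hr]
    · simp [h]
    · simp [h, h.not_gt, hr, dist_comm]
  set A : Matrix (Fin (n + 1)) (Fin (n + 1)) ℂ :=
    (MvPolynomial.eval r).mapMatrix (cmPolyMatrix n) with hA
  have hA00 : A 0 0 = 0 := by simp [hA, cmPolyMatrix]
  have hA0s : ∀ a : Fin n, A 0 a.succ = 1 := by simp [hA, cmPolyMatrix]
  have hAs0 : ∀ a : Fin n, A a.succ 0 = 1 := by simp [hA, cmPolyMatrix]
  have hAss : ∀ a b : Fin n, A a.succ b.succ = (dist (x a) (x b) : ℂ) ^ 2 := by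
    intro a b
    simp [hA, cmPolyMatrix, hR]
  have hAsym : A.IsSymm := by
    rw [hA]
    exact (cm_symm n).map _
  let V : Fin (n + 1) → ℂ := Fin.cons Δ0 (fun j => (m j : ℂ) * z j)
  have hmz : ∀ j, z j ≠ 0 → (m j : ℂ) * z j ≠ 0 := fun j h =>
    mul_ne_zero (Complex.ofReal_ne_zero.mpr (hm j).ne') h
  have hvne : (fun j => (m j : ℂ) * z j) ≠ 0 := fun h => hmz i hzi (congrFun h i)
  have hAV : A.mulVec V = 0 := by
    funext a
    refine Fin.cases ?_ (fun a => ?_) a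
    · simp [Matrix.mulVec, dotProduct, Fin.sum_univ_succ, hA00, hA0s, V, hker0]
    · simp only [Matrix.mulVec, dotProduct, Fin.sum_univ_succ (n := n), hAs0, hAss, V, Fin.cons_zero,
        Fin.cons_succ, Pi.zero_apply, one_mul]
      rw [← hkerl a]
      congr 1
      apply Finset.sum_congr rfl
      intro j _
      rw [dist_comm, mul_comm]
  have hVne : V ≠ 0 := fun h => hmz i hzi (by simpa [V] using congrFun h i.succ)
  have hdet : A.det = 0 := Matrix.exists_mulVec_eq_zero_iff.mp ⟨V, hVne, hAV⟩
  -- the kernel is a line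
  have hline : ∀ u : Fin (n + 1) → ℂ, A.mulVec u = 0 → ∃ c : ℂ, ∀ j : Fin n,
      u j.succ = c * ((m j : ℂ) * z j) := by
    intro u hu
    apply complex_line hn x hdim Δ0 _ hvne hker0 hkerl (u 0) (fun j => u j.succ)
    · have := congrFun hu 0
      simpa [Matrix.mulVec, dotProduct, Fin.sum_univ_succ, hA00, hA0s] using this
    · intro l
      have := congrFun hu l.succ
      simp only [Matrix.mulVec, dotProduct, Fin.sum_univ_succ (n := n), hAs0, hAss, Pi.zero_apply,
        one_mul] at this
      rw [← this]
      congr 1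
      apply Finset.sum_congr rfl
      intro j _
      rw [dist_comm, mul_comm]
  have hadjne : A.adjugate i.succ i.succ ≠ 0 := by
    rw [Matrix.adjugate_apply]
    intro h
    obtain ⟨u, hu0, hu⟩ := Matrix.exists_mulVec_eq_zero_iff.mpr h
    have hui : u i.succ = 0 := by
      have := congrFun hu i.succ
      simpa [Matrix.mulVec] using this
    have hother : ∀ a, a ≠ i.succ → A.mulVec u a = 0 := by
      intro a ha
      have := congrFun hu a
      simpa [Matrix.mulVec, Matrix.updateRow_ne ha] using this
    have hdot : dotProduct V (A.mulVec u) = 0 := by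
      rw [Matrix.dotProduct_mulVec, ← Matrix.mulVec_transpose, hAsym.eq, hAV, zero_dotProduct]
    have hAu : A.mulVec u = 0 := by
      funext a
      by_cases ha : a = i.succ
      · subst ha
        rw [dotProduct, Finset.sum_eq_single i.succ] at hdot
        · have hVi : V i.succ ≠ 0 := by simpa only [V, Fin.cons_succ] using hmz i hzi
          exact (mul_eq_zero.mp hdot).resolve_left hVi
        · intro b _ hb
          rw [hother b hb, mul_zero]
        · simp
      · exact hother a ha
    obtain ⟨c, hc⟩ := hline u hAu
    have hc0 : c = 0 := by
      have := hc i
      rw [hui] at this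
      exact (mul_eq_zero.mp this.symm).resolve_right (hmz i hzi)
    have hus : ∀ j : Fin n, u j.succ = 0 := by
      intro j; rw [hc, hc0, zero_mul]
    apply hu0
    funext a
    refine Fin.cases ?_ (fun a => hus a) a
    have := congrFun hAu i.succ
    simpa [Matrix.mulVec, dotProduct, Fin.sum_univ_succ (n := n), hAs0, hus] using this
  obtain ⟨c, hc⟩ := hline (fun a => A.adjugate a i.succ) (by
    have := Matrix.mul_adjugate A
    rw [hdet, zero_smul] at this
    funext a
    exact congrFun (congrFun this a) i.succ)
  have hcne : c ≠ 0 := by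
    rintro rfl
    exact hadjne (by rw [hc i, zero_mul])
  have hadj : ∀ a b, MvPolynomial.eval r ((cmPolyMatrix n).adjugate a b) = A.adjugate a b := by
    intro a b
    rw [hA, ← RingHom.map_adjugate]
    rfl
  have hz2 : ∃ ε : ℂ, ε ≠ 0 ∧ ∃ y : Fin n → ℝ, ∀ j, z j = ε * y j := by
    rcases hzri with ⟨h, _⟩ | ⟨h, _⟩
    · exact ⟨1, one_ne_zero, fun j => (z j).re, fun j => by apply Complex.ext <;> simp [h]⟩
    · exact ⟨Complex.I, Complex.I_ne_zero, fun j => (z j).im,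
        fun j => by apply Complex.ext <;> simp [h]⟩
  obtain ⟨ε, hε, y, hy⟩ := hz2
  have hterm : ∀ j ∈ Finset.univ \ {i}, (dist (x i) (x j) : ℂ) ^ (1 - c2) *
            MvPolynomial.eval r (dF i j) * z j
      = (4 * c * ε ^ 2) *
        ((dist (x i) (x j) ^ (1 - c2) * dist (x i) (x j) * m j * y j ^ 2 : ℝ) : ℂ) := by
    intro j hj
    have hij : i ≠ j := by
      rintro rfl
      simp at hj
    rw [dF_eq i j hij, map_mul, map_mul, hR, hadj, hc j, hy j]
    push_cast
    rw [map_ofNat]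
    ring
  rw [Finset.sum_congr rfl hterm, ← Finset.mul_sum, ← Complex.ofReal_sum]
  apply mul_ne_zero (mul_ne_zero (mul_ne_zero (by norm_num) hcne) (pow_ne_zero 2 hε))
  rw [Complex.ofReal_ne_zero]
  apply ne_of_gt
  apply Finset.sum_pos'
  · intro j _
    have := (hm j).le
    positivity
  · refine ⟨k, by simpa using hik.symm, ?_⟩
    have hyk : y k ≠ 0 := by
      intro h
      apply hzk
      rw [hy, h]; simp
    have hd : 0 < dist (x i) (x k) := dist_pos.mpr (hinj.ne hik)
    have := hm k
    positivity
end

section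
/- Let a be a semi-integer (2a ∈ ℤ, a ≠ 0) and let V_i be an irreducible component of the quasi-affine set V^a ⊂ ℂ^{q+2n+1} (with its Zariski topology). If V_i is not contained in D_k = {(r, z, Δ_0, m) ∈ V^a : z_k = 0} for any k = 1, …, n, then V_i has dimension at most n, where the dimension of an irreducible quasi-affine set is the supremum of the lengths d of chains Z_0 ⊊ Z_1 ⊊ ⋯ ⊊ Z_d of nonempty irreducible closed subsets. -/
/-- `(∂F/∂R_{ij})` evaluated at `r`. -/
noncomputable def evalDF {n : ℕ} (r : PairIdx n → ℂ) (i j : Fin n) : ℂ :=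
  MvPolynomial.eval r (dF i j)

/-- `r_{ij}` as a symmetric function of the coordinates indexed by ordered pairs. -/
noncomputable def rC {n : ℕ} (r : PairIdx n → ℂ) (i j : Fin n) : ℂ :=
  if h : i < j then r ⟨(i, j), h⟩ else if h' : j < i then r ⟨(j, i), h'⟩ else 0

/-- The numeric Cayley–Menger matrix `A(r²)` of the numbers `r_{ij}`. -/
noncomputable def cmOf {n : ℕ} (r : PairIdx n → ℂ) :
    Matrix (Fin (n + 1)) (Fin (n + 1)) ℂ :=
  Matrix.of fun i j =>
    Fin.cases (Fin.cases 0 (fun _ => 1) j)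
      (fun i' => Fin.cases 1 (fun j' => rC r i' j' ^ 2) j) i

/-- `Ψ^a_i` evaluated at a point (with `c2 = 2a`): for `a < 0`,
`∑_{j≠i} r_{ij}^{−2a+1} (∂F/∂R_{ij})(r) z_j`; for `a > 0`,
`∑_{j≠i} (∏_{(k,l)≠(i,j)} r_{kl}^{2a−1}) (∂F/∂R_{ij})(r) z_j`. -/
noncomputable def Psi {n : ℕ} (c2 : ℤ) (r : PairIdx n → ℂ) (z : Fin n → ℂ) (i : Fin n) : ℂ :=
  if c2 < 0 then
    ∑ j ∈ Finset.univ \ {i}, rC r i j ^ (1 - c2).toNat * evalDF r i j * z j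
  else
    ∑ j ∈ Finset.univ \ {i},
      (∏ p ∈ Finset.univ.filter
          (fun p : PairIdx n => ¬((p.1.1 = i ∧ p.1.2 = j) ∨ (p.1.1 = j ∧ p.1.2 = i))),
        r p ^ (c2 - 1).toNat) * evalDF r i j * z j

/-- The coordinates of the affine space `ℂ^{q+2n+1}`: `R`-coordinates, `Z`-coordinates,
the coordinate `Δ`, and `M`-coordinates. -/
abbrev TVar (n : ℕ) := PairIdx n ⊕ (Fin n ⊕ (Unit ⊕ Fin n))

/-- A point of `ℂ^{q+2n+1}`. -/
abbrev Pt (n : ℕ) := TVar n → ℂ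

def rPart {n : ℕ} (P : Pt n) : PairIdx n → ℂ := fun p => P (Sum.inl p)
def zPart {n : ℕ} (P : Pt n) : Fin n → ℂ := fun i => P (Sum.inr (Sum.inl i))
def dPart {n : ℕ} (P : Pt n) : ℂ := P (Sum.inr (Sum.inr (Sum.inl ())))
def mPart {n : ℕ} (P : Pt n) : Fin n → ℂ := fun i => P (Sum.inr (Sum.inr (Sum.inr i)))

/-- `g^a_{ij}` evaluated at a point: `R_{ij}^{2a} − 1 − Z_i Z_j` if `a > 0`, and
`R_{ij}^{−2a}(Z_i Z_j + 1) − 1` if `a < 0` (with `c2 = 2a`). -/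
noncomputable def gEval {n : ℕ} (c2 : ℤ) (P : Pt n) (p : PairIdx n) : ℂ :=
  if 0 < c2 then rPart P p ^ c2.toNat - 1 - zPart P p.1.1 * zPart P p.1.2
  else rPart P p ^ (-c2).toNat * (zPart P p.1.1 * zPart P p.1.2 + 1) - 1

/-- `Γ_l` evaluated at a point: `Γ_0 = ∑ M_j Z_j` and
`Γ_l = Δ + ∑ M_j Z_j R_{jl}²` for `l = 1, …, n`. -/
noncomputable def GammaEval {n : ℕ} (P : Pt n) (l : Fin (n + 1)) : ℂ :=
  Fin.cases (∑ j, mPart P j * zPart P j)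
    (fun l' => dPart P + ∑ j, mPart P j * zPart P j * rC (rPart P) j l' ^ 2) l

/-- The algebraic set `Ṽ^a`: common zero set of the `g^a_{ij}`, `F`, and the `Γ_l`. -/
noncomputable def Vtilde (n : ℕ) (c2 : ℤ) : Set (Pt n) :=
  {P | (∀ p, gEval c2 P p = 0) ∧ (cmOf (rPart P)).det = 0 ∧ ∀ l, GammaEval P l = 0}

/-- `W_1 = {∏_{i<j} R_{ij} = 0}`. -/
noncomputable def W1 (n : ℕ) : Set (Pt n) := {P | ∏ p, rPart P p = 0}

/-- `W_2 = {F_{ij} = 0 for all 0 ≤ i, j ≤ n}` (the `(i,j)` cofactor of the Cayley–Menger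
matrix is the `(j,i)` entry of its adjugate). -/
noncomputable def W2 (n : ℕ) : Set (Pt n) :=
  {P | ∀ i j : Fin (n + 1), (cmOf (rPart P)).adjugate j i = 0}

/-- `W_3^a = {Ψ^a_1 = ⋯ = Ψ^a_n = 0}`. -/
noncomputable def W3 (n : ℕ) (c2 : ℤ) : Set (Pt n) :=
  {P | ∀ i, Psi c2 (rPart P) (zPart P) i = 0}

/-- The quasi-affine set `V^a = Ṽ^a \ (W_1 ∪ W_2 ∪ W_3^a)`. -/
noncomputable def Vset (n : ℕ) (c2 : ℤ) : Set (Pt n) :=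
  Vtilde n c2 \ (W1 n ∪ W2 n ∪ W3 n c2)

/-- A subset of affine space `ℂ^σ` is Zariski-closed if it is the common zero set of a
collection of polynomials. -/
def IsZClosed {σ : Type} (S : Set (σ → ℂ)) : Prop :=
  ∃ T : Set (MvPolynomial σ ℂ), S = {x | ∀ f ∈ T, MvPolynomial.eval x f = 0}

/-- A subset is irreducible (in the Zariski topology): it is nonempty, and whenever it is
covered by two Zariski-closed sets it is contained in one of them. (For a subset of a
quasi-affine set this coincides with irreducibility in the subspace topology.) -/
def IsIrr {σ : Type} (S : Set (σ → ℂ)) : Prop :=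
  S.Nonempty ∧ ∀ C₁ C₂ : Set (σ → ℂ), IsZClosed C₁ → IsZClosed C₂ →
    S ⊆ C₁ ∪ C₂ → S ⊆ C₁ ∨ S ⊆ C₂

/-- `S` is an irreducible component of `W`: a maximal irreducible subset of `W`. -/
def IsIrrComponentOf {σ : Type} (W S : Set (σ → ℂ)) : Prop :=
  S ⊆ W ∧ IsIrr S ∧ ∀ S' : Set (σ → ℂ), S' ⊆ W → IsIrr S' → S ⊆ S' → S' = S

/-- The dimension of `V` (with its induced Zariski topology) is at most `N`: every chain
`Z_0 ⊊ Z_1 ⊊ ⋯ ⊊ Z_d` of nonempty irreducible subsets of `V` that are closed in `V`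
has length `d ≤ N`. -/
def DimLE {σ : Type} (V : Set (σ → ℂ)) (N : ℕ) : Prop :=
  ∀ (d : ℕ) (Z : Fin (d + 1) → Set (σ → ℂ)),
    StrictMono Z → (∀ i, (Z i).Nonempty) → (∀ i, IsIrr (Z i)) →
    (∀ i, ∃ C, IsZClosed C ∧ Z i = V ∩ C) → d ≤ N


open MvPolynomial in
theorem kd_linearIndependent {k K ι : Type} [Field k] [CharZero k] [Field K] [Algebra k K]
    [Algebra.EssFiniteType k K] (f : ι → K) (hf : AlgebraicIndependent k f) :
    LinearIndependent K (fun i => KaehlerDifferential.D k K (f i)) := by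
  let _ : Algebra (MvPolynomial ι k) K := (aeval f : MvPolynomial ι k →ₐ[k] K).toRingHom.toAlgebra
  have hmap : ∀ p : MvPolynomial ι k, algebraMap (MvPolynomial ι k) K p = aeval f p := fun p => rfl
  have : IsScalarTower k (MvPolynomial ι k) K := IsScalarTower.of_algebraMap_eq (by
    intro x; rw [hmap]; simp)
  have : FaithfulSMul (MvPolynomial ι k) K := by
    rw [faithfulSMul_iff_algebraMap_injective]
    exact hf
  let _ : Algebra (FractionRing (MvPolynomial ι k)) K := FractionRing.liftAlgebra _ _
  have : IsScalarTower (MvPolynomial ι k) (FractionRing (MvPolynomial ι k)) K :=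
    FractionRing.isScalarTower_liftAlgebra _ _
  have : IsScalarTower k (FractionRing (MvPolynomial ι k)) K :=
    IsScalarTower.of_algebraMap_eq (by
      intro x
      rw [IsScalarTower.algebraMap_apply k (MvPolynomial ι k) K,
        IsScalarTower.algebraMap_apply k (MvPolynomial ι k) (FractionRing (MvPolynomial ι k)),
        ← IsScalarTower.algebraMap_apply (MvPolynomial ι k) (FractionRing (MvPolynomial ι k)) K])
  have : Algebra.EssFiniteType (FractionRing (MvPolynomial ι k)) K :=
    Algebra.EssFiniteType.of_comp k _ _
  have : CharZero (FractionRing (MvPolynomial ι k)) :=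
    charZero_of_injective_algebraMap (algebraMap k _).injective
  have : Algebra.FormallySmooth (FractionRing (MvPolynomial ι k)) K := inferInstance
  have : Algebra.FormallySmooth (MvPolynomial ι k) (FractionRing (MvPolynomial ι k)) :=
    .of_isLocalization (nonZeroDivisors _)
  have : Algebra.FormallySmooth (MvPolynomial ι k) K := .comp _ (FractionRing (MvPolynomial ι k)) _
  have hinj : Function.Injective (KaehlerDifferential.mapBaseChange k (MvPolynomial ι k) K) := by
    rw [injective_iff_map_eq_zero]
    intro x hx
    obtain ⟨y, rfl⟩ := (Algebra.H1Cotangent.exact_δ_mapBaseChange k (MvPolynomial ι k) K x).mp hx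
    rw [Subsingleton.elim y 0, map_zero]
  have hb := ((KaehlerDifferential.mvPolynomialBasis k ι).baseChange K).linearIndependent
  have := hb.map' _ (LinearMap.ker_eq_bot.mpr hinj)
  have heq : (fun i => KaehlerDifferential.D k K (f i)) =
      (KaehlerDifferential.mapBaseChange k (MvPolynomial ι k) K) ∘
        ((KaehlerDifferential.mvPolynomialBasis k ι).baseChange K) := by
    ext i
    simp [KaehlerDifferential.mvPolynomialBasis_apply, hmap]
  rw [heq]
  exact this

theorem algInd_step {k A ι : Type} [Field k] [CommRing A] [IsDomain A] [Algebra k A]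
    (P : Ideal A) (f : ι → A) (hf : ∀ p : MvPolynomial ι k, MvPolynomial.aeval f p ∈ P → p = 0)
    (x : A) (hx : x ∈ P) (hx0 : x ≠ 0) :
    AlgebraicIndependent k (fun o : Option ι => o.elim x f) := by
  have hf' : AlgebraicIndependent k f := by
    rw [algebraicIndependent_iff]
    intro p hp
    exact hf p (by rw [hp]; exact P.zero_mem)
  rw [hf'.option_iff_transcendental]
  intro halg
  obtain ⟨c, hc0, hc⟩ := halg.exists_nonzero_dvd (mem_nonZeroDivisors_of_ne_zero hx0)
  obtain ⟨p, hp⟩ : ∃ p : MvPolynomial ι k, MvPolynomial.aeval f p = (c : A) := by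
    exact (Algebra.adjoin_range_eq_range_aeval k f).le c.2
  have hcP : (c : A) ∈ P := P.mem_of_dvd hc hx
  have := hf p (by rw [hp]; exact hcP)
  apply hc0
  ext
  rw [← hp, this]
  simp

/-- A strictly decreasing chain of prime ideals gives algebraically independent elements. -/
theorem exists_algInd_of_chain {k A : Type} [Field k] [CommRing A] [Algebra k A] (d : ℕ) :
    ∀ P : Fin (d + 1) → Ideal A, StrictAnti P → (∀ i, (P i).IsPrime) →
    ∃ (ι : Type) (_ : Fintype ι) (f : ι → A), Fintype.card ι = d ∧
      ∀ p : MvPolynomial ι k, MvPolynomial.aeval f p ∈ P (Fin.last d) → p = 0 := by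
  induction d with
  | zero =>
    intro P _ hP
    refine ⟨Empty, inferInstance, Empty.elim, rfl, ?_⟩
    intro p hp
    obtain ⟨c, rfl⟩ := MvPolynomial.C_surjective Empty p
    by_contra hc
    have hc' : c ≠ 0 := by
      rintro rfl
      simp at hc
    rw [MvPolynomial.aeval_C] at hp
    exact (hP _).ne_top (Ideal.eq_top_of_isUnit_mem _ hp ((IsUnit.mk0 c hc').map _))
  | succ d ih =>
    intro P hanti hP
    obtain ⟨ι, hι, f, hcard, hf⟩ := ih (fun i => P i.castSucc)
      (fun i j hij => hanti (Fin.castSucc_lt_castSucc_iff.mpr hij)) (fun i => hP _)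
    obtain ⟨x, hx, hx'⟩ := SetLike.exists_of_lt (hanti (Fin.castSucc_lt_last (Fin.last d)))
    refine ⟨Option ι, inferInstance, fun o => o.elim x f, by simp [hcard], ?_⟩
    have := hP (Fin.last (d + 1))
    set Q := P (Fin.last (d + 1)) with hQ
    have hle : Q ≤ P (Fin.castSucc (Fin.last d)) :=
      (hanti (Fin.castSucc_lt_last (Fin.last d))).le
    have key := algInd_step (k := k) ((P (Fin.castSucc (Fin.last d))).map (Ideal.Quotient.mk Q))
      (fun i => Ideal.Quotient.mkₐ k Q (f i)) (by
        intro p hp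
        apply hf
        rw [← MvPolynomial.comp_aeval_apply] at hp
        have := (Ideal.mem_quotient_iff_mem hle).mp hp
        exact this) (Ideal.Quotient.mkₐ k Q x) (Ideal.mem_map_of_mem _ hx) (by
        intro h
        exact hx' (Ideal.Quotient.eq_zero_iff_mem.mp h))
    rw [algebraicIndependent_iff] at key
    intro p hp
    apply key
    have e : (fun o : Option ι => o.elim (Ideal.Quotient.mkₐ k Q x)
        (fun i => Ideal.Quotient.mkₐ k Q (f i))) =
        fun o => Ideal.Quotient.mkₐ k Q (o.elim x f) := by
      ext o; cases o <;> rfl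
    rw [e, ← MvPolynomial.comp_aeval_apply]
    exact Ideal.Quotient.eq_zero_iff_mem.mpr hp

/-- Kernel vectors of a singular matrix with a nonzero cofactor are multiples of one another. -/
theorem ker_smul {K : Type} [Field K] {n : ℕ} (A : Matrix (Fin (n + 1)) (Fin (n + 1)) K)
    (hdet : A.det = 0) (i0 j0 : Fin (n + 1)) (h : A.adjugate j0 i0 ≠ 0)
    (v : Fin (n + 1) → K) (hv : A.mulVec v = 0) :
    ∃ κ : K, ∀ j, v j = κ * A.adjugate j i0 := by
  have hB : (A.submatrix i0.succAbove j0.succAbove).det ≠ 0 := by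
    intro h0
    apply h
    rw [Matrix.adjugate_fin_succ_eq_det_submatrix, h0, mul_zero]
  set w : Fin (n + 1) → K := fun j => A.adjugate j i0 with hw
  have hAw : A.mulVec w = 0 := by
    ext i
    have := congrFun (congrFun (Matrix.mul_adjugate A) i) i0
    rw [hdet, zero_smul] at this
    exact this
  set u : Fin (n + 1) → K := v j0 • w - w j0 • v with hu
  have hAu : A.mulVec u = 0 := by
    rw [hu, Matrix.mulVec_sub, Matrix.mulVec_smul, Matrix.mulVec_smul, hAw, hv]
    simp
  have hu0 : u j0 = 0 := by simp [hu, mul_comm]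
  have hBu : (A.submatrix i0.succAbove j0.succAbove).mulVec (fun j => u (j0.succAbove j)) = 0 := by
    ext i
    have := congrFun hAu (i0.succAbove i)
    simp only [Matrix.mulVec, dotProduct, Pi.zero_apply] at this
    rw [Fin.sum_univ_succAbove _ j0, hu0, mul_zero, zero_add] at this
    exact this
  have hz := Matrix.eq_zero_of_mulVec_eq_zero hB hBu
  have hw0 : w j0 ≠ 0 := h
  refine ⟨v j0 / w j0, fun j => ?_⟩
  have huj : u j = 0 := by
    rcases Fin.eq_self_or_eq_succAbove j0 j with rfl | ⟨t, rfl⟩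
    · exact hu0
    · exact congrFun hz t
  simp only [hu, Pi.sub_apply, Pi.smul_apply, smul_eq_mul] at huj
  change v j = v j0 / w j0 * w j
  field_simp
  linear_combination -huj

section Core

variable {n : ℕ} {R : Type} [CommRing R] [Algebra ℂ R]

/-- Symmetric extension of a function on pairs. -/
def symP {X : Type} [Zero X] (f : PairIdx n → X) (i j : Fin n) : X :=
  if h : i < j then f ⟨(i, j), h⟩ else if h' : j < i then f ⟨(j, i), h'⟩ else 0

theorem symP_comm {X : Type} [Zero X] (f : PairIdx n → X) (i j : Fin n) :
    symP f i j = symP f j i := by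
  unfold symP
  split_ifs with h1 h2
  · exact absurd h1 (not_lt.mpr h2.le)
  all_goals rfl

theorem sum_symP {X : Type} [AddCommMonoid X] (f : PairIdx n → X) (i : Fin n)
    (hf : ∀ p : PairIdx n, p.1.1 ≠ i → p.1.2 ≠ i → f p = 0) :
    ∑ p, f p = ∑ j ∈ Finset.univ \ {i}, symP f i j := by
  symm
  have hne : ∀ j ∈ Finset.univ \ {i}, j ≠ i := by
    intro j hj; simpa using hj
  let e : ∀ j ∈ Finset.univ \ {i}, PairIdx n := fun j hj =>
    if h : i < j then ⟨(i, j), h⟩ else ⟨(j, i), lt_of_le_of_ne (not_lt.mp h) (hne j hj)⟩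
  rw [← Finset.sum_subset (Finset.subset_univ
    (Finset.univ.filter (fun p : PairIdx n => p.1.1 = i ∨ p.1.2 = i)))]
  · refine Finset.sum_bij e ?_ ?_ ?_ ?_
    · intro j hj
      simp only [e]
      split_ifs <;> simp
    · intro j hj k hk hjk
      simp only [e] at hjk
      have h1 := hne j hj
      have h2 := hne k hk
      split_ifs at hjk <;> simp only [Subtype.mk.injEq, Prod.mk.injEq] at hjk <;> grind
    · rintro ⟨⟨a, b⟩, hab⟩ hp
      simp only [Finset.mem_filter, Finset.mem_univ, true_and] at hp
      simp only at hab
      rcases hp with h | h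
      · subst h
        refine ⟨b, by simpa using hab.ne', ?_⟩
        simp [e, hab]
      · subst h
        refine ⟨a, by simpa using hab.ne, ?_⟩
        simp [e, not_lt.mpr hab.le]
    · intro j hj
      simp only [e, symP]
      split_ifs with h1 h2
      · rfl
      · rfl
      · exact absurd (lt_of_le_of_ne (not_lt.mp h1) (hne j hj)) h2
  · intro p _ hp
    simp only [Finset.mem_filter, Finset.mem_univ, true_and, not_or] at hp
    exact hf p hp.1 hp.2

/-- Cayley-Menger matrix over a general algebra. -/
def cmG (r : PairIdx n → R) : Matrix (Fin (n + 1)) (Fin (n + 1)) R :=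
  Matrix.of fun i j =>
    Fin.cases (Fin.cases 0 (fun _ => 1) j)
      (fun i' => Fin.cases 1 (fun j' => symP r i' j' ^ 2) j) i

def sG (c2 : ℤ) (r : PairIdx n → R) (p : PairIdx n) : R :=
  if c2 < 0 then r p ^ (1 - c2).toNat
  else ∏ p' ∈ Finset.univ.filter (fun p' : PairIdx n => p' ≠ p), r p' ^ (c2 - 1).toNat

noncomputable def dG (r : PairIdx n → R) (p : PairIdx n) : R :=
  MvPolynomial.aeval r (MvPolynomial.pderiv p (Fpoly n))

noncomputable def PsiG (c2 : ℤ) (r : PairIdx n → R) (z : Fin n → R) (i : Fin n) : R :=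
  ∑ j ∈ Finset.univ \ {i}, symP (sG c2 r) i j * symP (dG r) i j * z j

def gG (c2 : ℤ) (r : PairIdx n → R) (z : Fin n → R) (p : PairIdx n) : R :=
  if 0 < c2 then r p ^ c2.toNat - 1 - z p.1.1 * z p.1.2
  else r p ^ (-c2).toNat * (z p.1.1 * z p.1.2 + 1) - 1

def vecG (z m : Fin n → R) (d : R) (i : Fin (n + 1)) : R :=
  Fin.cases d (fun j => m j * z j) i

theorem aeval_Fpoly (r : PairIdx n → R) :
    MvPolynomial.aeval r (Fpoly n) = (cmG r).det := by
  unfold Fpoly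
  rw [AlgHom.map_det]
  congr 1
  ext i j
  refine Fin.cases ?_ (fun i' => ?_) i <;> refine Fin.cases ?_ (fun j' => ?_) j <;>
    simp [cmG, cmPolyMatrix, Rvar, symP]
  split_ifs <;> simp

theorem deriv_aeval {M : Type} [AddCommGroup M] [Module R M] [Module ℂ M] [IsScalarTower ℂ R M]
    (D : Derivation ℂ R M) {σ : Type} [Fintype σ] (r : σ → R) (F : MvPolynomial σ ℂ) :
    D (MvPolynomial.aeval r F) =
      ∑ p, (MvPolynomial.aeval r (MvPolynomial.pderiv p F)) • D (r p) := by
  classical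
  induction F using MvPolynomial.induction_on with
  | C a => simp
  | add p q hp hq => simp [hp, hq, add_smul, Finset.sum_add_distrib]
  | mul_X p i hp =>
    rw [map_mul, MvPolynomial.aeval_X, Derivation.leibniz, hp]
    simp only [Derivation.leibniz, MvPolynomial.pderiv_X, map_add, smul_eq_mul, map_mul,
      add_smul, Finset.sum_add_distrib, MvPolynomial.aeval_X, Finset.smul_sum, mul_smul]
    congr 1
    rw [Finset.sum_eq_single i]
    · simp
    · intro b _ hb
      simp [Ne.symm hb]
    · simp

theorem deriv_adjugate {M : Type} [AddCommGroup M] [Module R M] [Module ℂ M]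
    [IsScalarTower ℂ R M] (D : Derivation ℂ R M) (r : PairIdx n → R) (hr : ∀ p, D (r p) = 0)
    (i j : Fin (n + 1)) : D ((cmG r).adjugate i j) = 0 := by
  have : (cmG r).adjugate i j = MvPolynomial.aeval r
      ((cmG (fun p => (MvPolynomial.X p : MvPolynomial (PairIdx n) ℂ))).adjugate i j) := by
    have h := (AlgHom.map_adjugate (MvPolynomial.aeval r : _ →ₐ[ℂ] R)
      (cmG (fun p => (MvPolynomial.X p : MvPolynomial (PairIdx n) ℂ))))
    have h2 : (MvPolynomial.aeval r : _ →ₐ[ℂ] R).mapMatrix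
        (cmG (fun p => (MvPolynomial.X p : MvPolynomial (PairIdx n) ℂ))) = cmG r := by
      ext i j
      refine Fin.cases ?_ (fun i' => ?_) i <;> refine Fin.cases ?_ (fun j' => ?_) j <;>
        simp [cmG, symP]
      split_ifs <;> simp
    rw [h2] at h
    rw [← h]
    rfl
  rw [this, deriv_aeval]
  simp [hr]

end Core

section CoreField

variable {n : ℕ} {K : Type} [Field K] [Algebra ℂ K]
variable {M : Type} [AddCommGroup M] [Module K M] [Module ℂ M] [IsScalarTower ℂ K M]

theorem deriv_r (c2 : ℤ) (hc2 : c2 ≠ 0) (D : Derivation ℂ K M) (r : PairIdx n → K)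
    (z : Fin n → K) (hr : ∀ p, r p ≠ 0) (hg : ∀ p, gG c2 r z p = 0) :
    ∃ L : K, L ≠ 0 ∧ ∀ p, L • D (r p) =
      sG c2 r p • (z p.1.1 • D (z p.1.2) + z p.1.2 • D (z p.1.1)) := by
  have : CharZero K := charZero_of_injective_algebraMap (algebraMap ℂ K).injective
  rcases lt_or_gt_of_ne hc2 with hneg | hpos
  · obtain ⟨c, hc⟩ : ∃ c : ℕ, c2 = -(c + 1 : ℕ) := ⟨(-c2).toNat - 1, by omega⟩
    refine ⟨-((c + 1 : ℕ) : K), neg_ne_zero.mpr (Nat.cast_ne_zero.mpr (by omega)), fun p => ?_⟩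
    have h1 : (-c2).toNat = c + 1 := by omega
    have h2 : (1 - c2).toNat = c + 2 := by omega
    have hgp := hg p
    rw [gG, if_neg (by omega), h1, sub_eq_zero] at hgp
    rw [sG, if_pos hneg, h2]
    have hD := congrArg D hgp
    simp only [Derivation.leibniz, Derivation.leibniz_pow, map_add, Derivation.map_one_eq_zero,
      add_zero, Nat.add_sub_cancel] at hD
    set E : M := z p.1.1 • D (z p.1.2) + z p.1.2 • D (z p.1.1) with hE
    have h3 : r p ^ (c + 2) • E + ((c + 1 : ℕ) : K) • D (r p) = 0 := by
      have hD' := congrArg (fun x => (r p) • x) hD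
      simp only [smul_add, smul_zero, smul_smul, ← Nat.cast_smul_eq_nsmul K] at hD'
      rw [← hD']
      congr 1
      · congr 1; ring
      · congr 1
        linear_combination (-((c + 1 : ℕ) : K)) * hgp
    rw [neg_smul, neg_eq_iff_add_eq_zero, add_comm]
    exact h3
  · obtain ⟨c, hc⟩ : ∃ c : ℕ, c2 = (c + 1 : ℕ) := ⟨c2.toNat - 1, by omega⟩
    have h1 : c2.toNat = c + 1 := by omega
    have h2 : (c2 - 1).toNat = c := by omega
    refine ⟨((c + 1 : ℕ) : K) * ∏ p, r p ^ c, mul_ne_zero (Nat.cast_ne_zero.mpr (by omega))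
      (Finset.prod_ne_zero_iff.mpr fun p _ => pow_ne_zero _ (hr p)), fun p => ?_⟩
    have hgp := hg p
    rw [gG, if_pos hpos, h1, sub_sub, sub_eq_zero] at hgp
    rw [sG, if_neg (by omega), h2]
    have hD := congrArg D hgp
    simp only [Derivation.leibniz, Derivation.leibniz_pow, map_add, Derivation.map_one_eq_zero,
      zero_add, Nat.add_sub_cancel] at hD
    rw [← hD, Finset.filter_ne', ← Finset.mul_prod_erase _ _ (Finset.mem_univ p),
      ← Nat.cast_smul_eq_nsmul K, smul_smul, smul_smul]
    congr 1
    ring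

theorem core (c2 : ℤ) (hc2 : c2 ≠ 0) (D : Derivation ℂ K M) (r : PairIdx n → K)
    (z m : Fin n → K) (d : K) (hr : ∀ p, r p ≠ 0) (hz : ∀ k, z k ≠ 0)
    (hg : ∀ p, gG c2 r z p = 0) (hF : (cmG r).det = 0)
    (i0 : Fin n) (hPsi : PsiG c2 r z i0 ≠ 0)
    (hDz : ∀ k, k ≠ i0 → D (z k) = 0) (κ : K) (hκ : D κ = 0) (l0 : Fin (n + 1))
    (hv : ∀ j, vecG z m d j = κ * (cmG r).adjugate j l0) :
    (∀ p, D (r p) = 0) ∧ (∀ k, D (z k) = 0) ∧ D d = 0 ∧ ∀ k, D (m k) = 0 := by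
  obtain ⟨L, hL, hLr⟩ := deriv_r c2 hc2 D r z hr hg
  have hsum : ∑ p, dG r p • D (r p) = 0 := by
    have := deriv_aeval D r (Fpoly n)
    rw [aeval_Fpoly, hF, map_zero] at this
    exact this.symm
  have hθ : PsiG c2 r z i0 • D (z i0) = 0 := by
    have h1 : ∑ p, dG r p • sG c2 r p • (z p.1.1 • D (z p.1.2) + z p.1.2 • D (z p.1.1)) = 0 := by
      simp only [← hLr]
      rw [← smul_zero L, ← hsum, Finset.smul_sum]
      exact Finset.sum_congr rfl fun p _ => smul_comm _ _ _
    rw [sum_symP _ i0] at h1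
    · rw [← h1, PsiG, Finset.sum_smul]
      refine Finset.sum_congr rfl fun j hj => ?_
      have hj' : j ≠ i0 := by simpa using hj
      unfold symP
      split_ifs with ha hb
      · simp only [hDz j hj', smul_zero, zero_add, smul_smul]
        congr 1; ring
      · simp only [hDz j hj', smul_zero, add_zero, smul_smul]
        congr 1; ring
      · simp
    · intro p h1 h2
      simp [hDz _ h1, hDz _ h2]
  have hθ0 : D (z i0) = 0 := (smul_eq_zero.mp hθ).resolve_left hPsi
  have hz0 : ∀ k, D (z k) = 0 := by
    intro k
    by_cases h : k = i0
    · rw [h, hθ0]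
    · exact hDz k h
  have hr0 : ∀ p, D (r p) = 0 := by
    intro p
    have := hLr p
    rw [hz0, hz0, smul_zero, smul_zero, add_zero, smul_zero] at this
    exact (smul_eq_zero.mp this).resolve_left hL
  have hv0 : ∀ j, D (vecG z m d j) = 0 := by
    intro j
    rw [hv, Derivation.leibniz, deriv_adjugate D r hr0, hκ, smul_zero, smul_zero, add_zero]
  refine ⟨hr0, hz0, hv0 0, fun k => ?_⟩
  have h := hv0 k.succ
  change D (m k * z k) = 0 at h
  rw [Derivation.leibniz, hz0, smul_zero, zero_add] at h
  exact (smul_eq_zero.mp h).resolve_left (hz k)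

end CoreField

section Transfer

variable {n : ℕ} {R S : Type} [CommRing R] [Algebra ℂ R] [CommRing S] [Algebra ℂ S]

theorem map_symP (φ : R →ₐ[ℂ] S) (f : PairIdx n → R) (i j : Fin n) :
    φ (symP f i j) = symP (fun p => φ (f p)) i j := by
  unfold symP
  split_ifs <;> simp

theorem map_cmG (φ : R →ₐ[ℂ] S) (r : PairIdx n → R) :
    φ.mapMatrix (cmG r) = cmG (fun p => φ (r p)) := by
  ext i j
  refine Fin.cases ?_ (fun i' => ?_) i <;> refine Fin.cases ?_ (fun j' => ?_) j <;>
    simp [cmG, map_symP]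

theorem map_cmG_det (φ : R →ₐ[ℂ] S) (r : PairIdx n → R) :
    φ (cmG r).det = (cmG (fun p => φ (r p))).det := by
  rw [AlgHom.map_det, map_cmG]

theorem map_cmG_adj (φ : R →ₐ[ℂ] S) (r : PairIdx n → R) (i j : Fin (n + 1)) :
    φ ((cmG r).adjugate i j) = (cmG (fun p => φ (r p))).adjugate i j := by
  have h := AlgHom.map_adjugate φ (cmG r)
  rw [map_cmG] at h
  rw [← h]
  rfl

theorem map_sG (φ : R →ₐ[ℂ] S) (c2 : ℤ) (r : PairIdx n → R) (p : PairIdx n) :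
    φ (sG c2 r p) = sG c2 (fun p => φ (r p)) p := by
  unfold sG
  split_ifs <;> simp

theorem map_dG (φ : R →ₐ[ℂ] S) (r : PairIdx n → R) (p : PairIdx n) :
    φ (dG r p) = dG (fun p => φ (r p)) p := by
  unfold dG
  rw [MvPolynomial.comp_aeval_apply]

theorem map_PsiG (φ : R →ₐ[ℂ] S) (c2 : ℤ) (r : PairIdx n → R) (z : Fin n → R) (i : Fin n) :
    φ (PsiG c2 r z i) = PsiG c2 (fun p => φ (r p)) (fun k => φ (z k)) i := by
  simp only [PsiG, map_sum, map_mul, map_symP, map_sG, map_dG]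

theorem map_gG (φ : R →ₐ[ℂ] S) (c2 : ℤ) (r : PairIdx n → R) (z : Fin n → R) (p : PairIdx n) :
    φ (gG c2 r z p) = gG c2 (fun p => φ (r p)) (fun k => φ (z k)) p := by
  unfold gG
  split_ifs <;> simp

theorem map_vecG (φ : R →ₐ[ℂ] S) (z m : Fin n → R) (d : R) (i : Fin (n + 1)) :
    φ (vecG z m d i) = vecG (fun k => φ (z k)) (fun k => φ (m k)) (φ d) i := by
  refine Fin.cases ?_ (fun i' => ?_) i <;> simp [vecG]

theorem map_mulVecG (φ : R →ₐ[ℂ] S) (r : PairIdx n → R) (z m : Fin n → R) (d : R)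
    (i : Fin (n + 1)) :
    φ ((cmG r).mulVec (vecG z m d) i) = (cmG (fun p => φ (r p))).mulVec
      (vecG (fun k => φ (z k)) (fun k => φ (m k)) (φ d)) i := by
  simp only [Matrix.mulVec, dotProduct, map_sum, map_mul, map_vecG, ← map_cmG φ r]
  rfl

theorem Gamma_eq (P : Pt n) (l : Fin (n + 1)) :
    (cmG (rPart P)).mulVec (vecG (zPart P) (mPart P) (dPart P)) l = GammaEval P l := by
  simp only [Matrix.mulVec, dotProduct, Fin.sum_univ_succ]
  refine Fin.cases ?_ (fun l' => ?_) l
  · simp [cmG, vecG, GammaEval]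
  · simp only [cmG, vecG, GammaEval, Matrix.of_apply, Fin.cases_zero, Fin.cases_succ, one_mul]
    congr 1
    refine Finset.sum_congr rfl fun j _ => ?_
    rw [symP_comm]
    exact mul_comm _ _

theorem Psi_eq (c2 : ℤ) (r : PairIdx n → ℂ) (z : Fin n → ℂ) (i : Fin n) :
    PsiG c2 r z i = Psi c2 r z i := by
  have hd : ∀ j, symP (dG r) i j = evalDF r i j := by
    intro j
    unfold symP evalDF dF dG
    split_ifs <;> simp [MvPolynomial.aeval_eq_eval]
  unfold PsiG Psi
  simp only [hd]
  split_ifs with hneg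
  · refine Finset.sum_congr rfl fun j hj => ?_
    have hj' : j ≠ i := by simpa using hj
    congr 2
    unfold symP rC sG
    split_ifs with h1 h2
    · rfl
    · rfl
    · exact absurd (lt_of_le_of_ne (not_lt.mp h1) hj') h2
  · refine Finset.sum_congr rfl fun j hj => ?_
    have hj' : j ≠ i := by simpa using hj
    congr 2
    unfold symP sG
    split_ifs with h1 h2
    · refine Finset.prod_congr ?_ fun _ _ => rfl
      ext ⟨⟨a, b⟩, hab⟩
      simp only [Finset.mem_filter, Finset.mem_univ, true_and, ne_eq, Subtype.mk.injEq,
        Prod.mk.injEq]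
      simp only at hab
      grind
    · refine Finset.prod_congr ?_ fun _ _ => rfl
      ext ⟨⟨a, b⟩, hab⟩
      simp only [Finset.mem_filter, Finset.mem_univ, true_and, ne_eq, Subtype.mk.injEq,
        Prod.mk.injEq]
      simp only at hab
      grind
    · exact absurd (lt_of_le_of_ne (not_lt.mp h1) hj') h2

end Transfer

section Zariski

variable {σ : Type}

/-- The ideal of polynomials vanishing on a set. -/
def vanI (S : Set (σ → ℂ)) : Ideal (MvPolynomial σ ℂ) where
  carrier := {f | ∀ x ∈ S, MvPolynomial.eval x f = 0}
  add_mem' := by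
    intro a b ha hb x hx
    rw [map_add, ha x hx, hb x hx, add_zero]
  zero_mem' := by
    intro x _
    simp
  smul_mem' := by
    intro c a ha x hx
    rw [smul_eq_mul, map_mul, ha x hx, mul_zero]

theorem mem_vanI {S : Set (σ → ℂ)} {f : MvPolynomial σ ℂ} :
    f ∈ vanI S ↔ ∀ x ∈ S, MvPolynomial.eval x f = 0 := Iff.rfl

theorem vanI_prime {S : Set (σ → ℂ)} (hS : IsIrr S) : (vanI S).IsPrime := by
  refine ⟨?_, ?_⟩
  · intro h
    obtain ⟨x, hx⟩ := hS.1
    have : (1 : MvPolynomial σ ℂ) ∈ vanI S := by rw [h]; trivial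
    have := this x hx
    simp at this
  · intro f g hfg
    have hc : ∀ f : MvPolynomial σ ℂ, IsZClosed {x | MvPolynomial.eval x f = 0} :=
      fun f => ⟨{f}, by simp⟩
    exact hS.2 _ _ (hc f) (hc g) (by
      intro x hx
      have := hfg x hx
      rw [map_mul] at this
      exact mul_eq_zero.mp this)

theorem vanI_anti {S T : Set (σ → ℂ)} (h : S ⊆ T) : vanI T ≤ vanI S :=
  fun _ hf x hx => hf x (h hx)

theorem vanI_strictAnti {V S T C : Set (σ → ℂ)} (h : S < T) (hT : T ⊆ V) (hC : IsZClosed C)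
    (hS : S = V ∩ C) : vanI T < vanI S := by
  refine lt_of_le_not_ge (vanI_anti h.le) fun hle => h.not_ge ?_
  intro x hx
  rw [hS]
  refine ⟨hT hx, ?_⟩
  obtain ⟨F, rfl⟩ := hC
  intro f hf
  have : f ∈ vanI S := fun y hy => by
    rw [hS] at hy
    exact hy.2 f hf
  exact hle this x hx

end Zariski

/-- The heart of the argument: the module of differentials of the function field is spanned by
`n` elements. -/
theorem omega_span {n : ℕ} (c2 : ℤ) (hc2 : c2 ≠ 0) {K : Type} [Field K] [Algebra ℂ K]
    (φ : MvPolynomial (TVar n) ℂ →ₐ[ℂ] K)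
    (hφ : ∀ x : K, ∃ a b, φ b ≠ 0 ∧ x * φ b = φ a)
    (r : PairIdx n → K) (z m : Fin n → K) (d : K)
    (hrφ : r = fun p => φ (MvPolynomial.X (Sum.inl p)))
    (hzφ : z = fun k => φ (MvPolynomial.X (Sum.inr (Sum.inl k))))
    (hdφ : d = φ (MvPolynomial.X (Sum.inr (Sum.inr (Sum.inl ())))))
    (hmφ : m = fun k => φ (MvPolynomial.X (Sum.inr (Sum.inr (Sum.inr k)))))
    (hr : ∀ p, r p ≠ 0) (hz : ∀ k, z k ≠ 0)
    (hg : ∀ p, gG c2 r z p = 0) (hF : (cmG r).det = 0)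
    (hΓ : (cmG r).mulVec (vecG z m d) = 0)
    (i0 : Fin n) (hPsi : PsiG c2 r z i0 ≠ 0)
    (j1 j0 : Fin (n + 1)) (hadj : (cmG r).adjugate j0 j1 ≠ 0) :
    ∃ b : Fin n → Ω[K⁄ℂ], Submodule.span K (Set.range b) = ⊤ := by
  obtain ⟨κ, hκ⟩ := ker_smul (cmG r) hF j1 j0 hadj _ hΓ
  let b : Fin n → Ω[K⁄ℂ] := fun k =>
    if k = i0 then KaehlerDifferential.D ℂ K κ else KaehlerDifferential.D ℂ K (z k)
  refine ⟨b, ?_⟩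
  set N := Submodule.span K (Set.range b) with hN
  let D : Derivation ℂ K (Ω[K⁄ℂ] ⧸ N) := N.mkQ.compDer (KaehlerDifferential.D ℂ K)
  have hD : ∀ x, D x = N.mkQ (KaehlerDifferential.D ℂ K x) := fun x => rfl
  have hDz : ∀ k, k ≠ i0 → D (z k) = 0 := by
    intro k hk
    rw [hD, Submodule.mkQ_apply, Submodule.Quotient.mk_eq_zero]
    exact Submodule.subset_span ⟨k, by simp [b, hk]⟩
  have hDκ : D κ = 0 := by
    rw [hD, Submodule.mkQ_apply, Submodule.Quotient.mk_eq_zero]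
    exact Submodule.subset_span ⟨i0, by simp [b]⟩
  obtain ⟨h1, h2, h3, h4⟩ := core c2 hc2 D r z m d hr hz hg hF i0 hPsi hDz κ hDκ j1 hκ
  have hX : ∀ t, D (φ (MvPolynomial.X t)) = 0 := by
    rintro (p | k | u | k)
    · have := h1 p; rw [hrφ] at this; exact this
    · have := h2 k; rw [hzφ] at this; exact this
    · rw [hdφ] at h3; exact h3
    · have := h4 k; rw [hmφ] at this; exact this
  have hpoly : ∀ f, D (φ f) = 0 := by
    intro f
    have : φ f = MvPolynomial.aeval (fun t => φ (MvPolynomial.X t)) f := by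
      rw [← MvPolynomial.comp_aeval_apply]
      simp
    rw [this, deriv_aeval]
    simp [hX]
  have hall : ∀ x, D x = 0 := by
    intro x
    obtain ⟨a, c, hc, hx⟩ := hφ x
    have := hpoly a
    rw [← hx, Derivation.leibniz, hpoly c, smul_zero, zero_add] at this
    exact (smul_eq_zero.mp this).resolve_left hc
  rw [eq_top_iff, ← KaehlerDifferential.span_range_derivation, Submodule.span_le]
  rintro _ ⟨x, rfl⟩
  have := hall x
  rw [hD, Submodule.mkQ_apply, Submodule.Quotient.mk_eq_zero] at this
  exact this

/-- Let `a` be a nonzero semi-integer (`c2 = 2a`) and let `V_i` be an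
irreducible component of `V^a` that is not contained in any
`D_k = {P ∈ V^a : z_k = 0}`. Then `V_i` has dimension at most `n`. -/
theorem statement15 {n : ℕ} (hn : 3 ≤ n) (c2 : ℤ) (hc2 : c2 ≠ 0)
    (Vi : Set (Pt n)) (hcomp : IsIrrComponentOf (Vset n c2) Vi)
    (hD : ∀ k : Fin n, ¬ Vi ⊆ {P ∈ Vset n c2 | zPart P k = 0}) :
    DimLE Vi n := by
  classical
  intro d Z hmono _ hirr hclosed
  have hVi := hcomp.2.1
  have hsub := hcomp.1
  have hprime := vanI_prime hVi
  choose C hC hZC using hclosed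
  have hZV : ∀ i, Z i ⊆ Vi := fun i => by
    rw [hZC i]; exact Set.inter_subset_left
  -- algebraically independent elements from the chain
  obtain ⟨ι, _, f, hcard, hf⟩ := exists_algInd_of_chain (k := ℂ) d (fun i => vanI (Z i))
    (fun i j hij => vanI_strictAnti (hmono hij) (hZV j) (hC i) (hZC i))
    (fun i => vanI_prime (hirr i))
  let B := MvPolynomial (TVar n) ℂ ⧸ vanI Vi
  let K := FractionRing B
  let φ : MvPolynomial (TVar n) ℂ →ₐ[ℂ] K :=
    (IsScalarTower.toAlgHom ℂ B K).comp (Ideal.Quotient.mkₐ ℂ (vanI Vi))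
  have hφ0 : ∀ g, φ g = 0 ↔ ∀ x ∈ Vi, MvPolynomial.eval x g = 0 := by
    intro g
    rw [← mem_vanI, ← Ideal.Quotient.eq_zero_iff_mem]
    exact map_eq_zero_iff (algebraMap B K) (IsFractionRing.injective B K)
  have hφs : ∀ x : K, ∃ a b, φ b ≠ 0 ∧ x * φ b = φ a := by
    intro x
    obtain ⟨a, b, hb, rfl⟩ := IsFractionRing.div_surjective (A := B) x
    obtain ⟨a, rfl⟩ := Ideal.Quotient.mk_surjective a
    obtain ⟨b, rfl⟩ := Ideal.Quotient.mk_surjective b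
    have hb1 : algebraMap B K (Ideal.Quotient.mk (vanI Vi) b) ≠ 0 :=
      IsFractionRing.to_map_ne_zero_of_mem_nonZeroDivisors hb
    have hb0 : φ b ≠ 0 := hb1
    exact ⟨a, b, hb0, div_mul_cancel₀ _ hb0⟩
  have hind : AlgebraicIndependent ℂ (fun i => φ (f i)) := by
    rw [algebraicIndependent_iff]
    intro p hp
    rw [← MvPolynomial.comp_aeval_apply] at hp
    exact hf p (vanI_anti (hZV _) ((hφ0 _).mp hp))
  have : Algebra.EssFiniteType ℂ K := Algebra.EssFiniteType.comp ℂ B K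
  have hlin := kd_linearIndependent _ hind
  -- the generic point
  obtain ⟨P, hP⟩ := hVi.1
  have hev : ∀ x : Pt n, ∀ g, MvPolynomial.eval x g = MvPolynomial.aeval x g := fun x g => by
    rw [MvPolynomial.aeval_eq_eval]
  let R0 : PairIdx n → MvPolynomial (TVar n) ℂ := fun p => MvPolynomial.X (Sum.inl p)
  let Z0 : Fin n → MvPolynomial (TVar n) ℂ := fun k => MvPolynomial.X (Sum.inr (Sum.inl k))
  let D0 : MvPolynomial (TVar n) ℂ := MvPolynomial.X (Sum.inr (Sum.inr (Sum.inl ())))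
  let M0 : Fin n → MvPolynomial (TVar n) ℂ := fun k =>
    MvPolynomial.X (Sum.inr (Sum.inr (Sum.inr k)))
  have hR : ∀ x : Pt n, (fun p => MvPolynomial.aeval x (R0 p)) = rPart x := fun x => by
    ext p; simp [R0, rPart]
  have hZ : ∀ x : Pt n, (fun p => MvPolynomial.aeval x (Z0 p)) = zPart x := fun x => by
    ext p; simp [Z0, zPart]
  have hD' : ∀ x : Pt n, MvPolynomial.aeval x D0 = dPart x := fun x => by
    simp [D0, dPart]
  have hM : ∀ x : Pt n, (fun p => MvPolynomial.aeval x (M0 p)) = mPart x := fun x => by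
    ext p; simp [M0, mPart]
  have hPV := (hsub hP).2
  simp only [Set.mem_union, not_or] at hPV
  obtain ⟨⟨hW1, hW2⟩, hW3⟩ := hPV
  simp only [W1, W2, W3, Set.mem_ofPred_eq, not_forall] at hW1 hW2 hW3
  obtain ⟨j1, j0, hadj⟩ := hW2
  obtain ⟨i0, hPsi⟩ := hW3
  rw [Finset.prod_eq_zero_iff] at hW1
  push Not at hW1
  obtain ⟨b, hb⟩ := omega_span c2 hc2 φ hφs (fun p => φ (R0 p)) (fun k => φ (Z0 k))
    (fun k => φ (M0 k)) (φ D0) rfl rfl rfl rfl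
    (by
      intro p h
      refine hW1 p (Finset.mem_univ p) ?_
      have := (hφ0 _).mp h P hP
      simpa [R0, rPart] using this)
    (by
      intro k h
      refine hD k fun x hx => ⟨hsub hx, ?_⟩
      have := (hφ0 _).mp h x hx
      simpa [Z0, zPart] using this)
    (by
      intro p
      rw [← map_gG, hφ0]
      intro x hx
      rw [hev, map_gG, hR, hZ]
      exact (hsub hx).1.1 p)
    (by
      rw [← map_cmG_det, hφ0]
      intro x hx
      rw [hev, map_cmG_det, hR]
      exact (hsub hx).1.2.1)
    (by
      ext l
      rw [← map_mulVecG, Pi.zero_apply, hφ0]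
      intro x hx
      rw [hev, map_mulVecG, hR, hZ, hM, hD', Gamma_eq]
      exact (hsub hx).1.2.2 l)
    i0
    (by
      rw [← map_PsiG]
      intro h
      apply hPsi
      have := (hφ0 _).mp h P hP
      rw [hev, map_PsiG, hR, hZ, Psi_eq] at this
      exact this)
    j1 j0
    (by
      rw [← map_cmG_adj]
      intro h
      apply hadj
      have := (hφ0 _).mp h P hP
      rw [hev, map_cmG_adj, hR] at this
      exact this)
  have hle := linearIndependent_le_span' _ hlin (Set.range b) (by rw [hb]; exact le_top)
  rw [← hcard, Cardinal.mk_fintype, Nat.cast_le] at *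
  refine hle.trans ?_
  simpa using Fintype.card_range_le b
end
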